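/- arXiv:2305.14636 — 3 statements merged into one kernel-verified Lean document; each statement's English description precedes it below -/
import Mathlib

section
/- Let Γ be a distance-regular graph of diameter D with intersection numbers c_1 = 1, valency k, and second largest distinct adjacency eigenvalue θ_1 (the maximum of the adjacency eigenvalues different from k). Suppose Γ contains an induced quadrangle (an induced 4-cycle) and θ_1 = b_1 − 1. Then the standard sequence (u_i)_{i=0}^D of θ_1 satisfies u_i = 1 − i·(a_1 + 2)/k for all 0 ≤ i ≤ D, and hence θ_1 is of classical 1-type. -/
/-- `G` is a distance-regular graph of diameter `D` with intersection numbers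
`p h i j = p^h_{ij}`: for any two vertices `x, y` at distance `h`, the number of
vertices `z` with `d(x,z) = i` and `d(y,z) = j` equals `p h i j`. -/
structure IsDRG {V : Type*} [Fintype V] (G : SimpleGraph V) (D : ℕ)
    (p : ℕ → ℕ → ℕ → ℕ) : Prop where
  connected : G.Connected
  dist_le : ∀ x y : V, G.dist x y ≤ D
  exists_dist_eq : ∃ x y : V, G.dist x y = D
  inter : ∀ h i j : ℕ, h ≤ D → i ≤ D → j ≤ D → ∀ x y : V, G.dist x y = h →
    {z : V | G.dist x z = i ∧ G.dist y z = j}.ncard = p h i j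

/-- `u` is the standard sequence of `θ` for a distance-regular graph with
intersection numbers `p` (so valency `k = b₀ = p 0 1 1`, `cᵢ = p i 1 (i-1)`,
`aᵢ = p i 1 i`, `bᵢ = p i 1 (i+1)`). -/
def IsStdSeq (D : ℕ) (p : ℕ → ℕ → ℕ → ℕ) (θ : ℝ) (u : ℕ → ℝ) : Prop :=
  u 0 = 1 ∧ u 1 = θ / (p 0 1 1 : ℝ) ∧
    ∀ i : ℕ, 1 ≤ i → i ≤ D - 1 →
      (p i 1 (i - 1) : ℝ) * u (i - 1) + (p i 1 i : ℝ) * u i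
          + (p i 1 (i + 1) : ℝ) * u (i + 1) = θ * u i

/-- The sequence `u` (a standard sequence) is of classical `q`-type:
`u i = (1/q) * u (i-1) + c` for `i = 1, …, D`, for some real `c`. -/
def IsClassicalQType (D : ℕ) (q : ℝ) (u : ℕ → ℝ) : Prop :=
  ∃ c : ℝ, ∀ i : ℕ, 1 ≤ i → i ≤ D → u i = (1 / q) * u (i - 1) + c

/-- `θ` is an eigenvalue of the adjacency matrix of `G`. -/
def IsAdjEigenval {V : Type*} [Fintype V] (G : SimpleGraph V) [DecidableRel G.Adj]
    (θ : ℝ) : Prop :=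
  ∃ v : V → ℝ, v ≠ 0 ∧ (G.adjMatrix ℝ).mulVec v = θ • v

/-!
Evaluating the distance matrices on an eigenvector extends the recurrence of the standard sequence
of an eigenvalue `θ` to `i = D`. Hence the differences `δᵢ = uᵢ - uᵢ₊₁` satisfy
`bᵢ₊₁ (δᵢ₊₁ - δᵢ) = cᵢ (δᵢ - δᵢ₋₁) + ((cᵢ₊₁ - bᵢ₊₁) - (cᵢ - bᵢ) - (k - θ)) δᵢ` for `0 ≤ i < D`.
Terwilliger's inequality for distance-regular graphs with an induced quadrangle says
`(cᵢ₊₁ - bᵢ₊₁) - (cᵢ - bᵢ) ≥ a₁ + 2`, and `a₁ + 2 = k - θ` when `θ = b₁ - 1`. As `δ₀ > 0`, the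
sequence `δ` is nondecreasing and positive. As `b_D = 0`, the right-hand side vanishes for
`i = D - 1`, and working backwards every difference `δᵢ - δᵢ₋₁` vanishes as well.
-/

section Tridiagonal

variable {D : ℕ} {b c δ u : ℕ → ℝ} {k κ θ : ℝ}

theorem eq_sub_mul_of_sub_succ_eq {d : ℝ} (hu : ∀ i < D, u i - u (i + 1) = d) (i : ℕ)
    (hi : i ≤ D) : u i = u 0 - i * d := by
  induction i with
  | zero => simp
  | succ i ih =>
    push_cast
    linarith [hu i hi, ih (by omega)]

theorem pred_le_and_pos_of_tridiagonal (hb : ∀ i < D, 0 < b i) (hc : ∀ i < D, 0 ≤ c i)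
    (hκ : ∀ i < D, κ ≤ c (i + 1) - b (i + 1) - (c i - b i)) (hδ₀ : 0 < δ 0)
    (hδ : ∀ i < D, b (i + 1) * (δ (i + 1) - δ i) =
      c i * (δ i - δ (i - 1)) + (c (i + 1) - b (i + 1) - (c i - b i) - κ) * δ i)
    (i : ℕ) (hi : i < D) : δ (i - 1) ≤ δ i ∧ 0 < δ i := by
  induction i with
  | zero => exact ⟨le_rfl, hδ₀⟩
  | succ i ih =>
    obtain ⟨hle, hpos⟩ := ih (by omega)
    have hci : 0 ≤ c i * (δ i - δ (i - 1)) := mul_nonneg (hc i (by omega)) (sub_nonneg.2 hle)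
    have hexc : 0 ≤ (c (i + 1) - b (i + 1) - (c i - b i) - κ) * δ i :=
      mul_nonneg (sub_nonneg.2 (hκ i (by omega))) hpos.le
    have hstep : 0 ≤ δ (i + 1) - δ i := by
      refine nonneg_of_mul_nonneg_right (b := δ (i + 1) - δ i) ?_ (hb (i + 1) hi)
      rw [hδ i (by omega)]
      exact add_nonneg hci hexc
    rw [Nat.add_sub_cancel]
    exact ⟨by linarith, by linarith⟩

theorem le_pred_of_tridiagonal (hb : ∀ i < D, 0 < b i) (hbD : b D = 0)
    (hc : ∀ i, 0 < i → i < D → 0 < c i)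
    (hκ : ∀ i < D, κ ≤ c (i + 1) - b (i + 1) - (c i - b i)) (hδpos : ∀ i < D, 0 < δ i)
    (hδ : ∀ i < D, b (i + 1) * (δ (i + 1) - δ i) =
      c i * (δ i - δ (i - 1)) + (c (i + 1) - b (i + 1) - (c i - b i) - κ) * δ i)
    (i : ℕ) (hi : i < D) : δ i ≤ δ (i - 1) := by
  suffices h : ∀ i ≤ D, b i * (δ i - δ (i - 1)) ≤ 0 from
    sub_nonpos.1 (nonpos_of_mul_nonpos_right (h i hi.le) (hb i hi))
  intro i hi
  induction hi using Nat.decreasingInduction with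
  | self => simp [hbD]
  | of_succ i hi ih =>
    rcases i.eq_zero_or_pos with rfl | h0
    · simp
    have hexc : 0 ≤ (c (i + 1) - b (i + 1) - (c i - b i) - κ) * δ i :=
      mul_nonneg (sub_nonneg.2 (hκ i hi)) (hδpos i hi).le
    have hci : c i * (δ i - δ (i - 1)) ≤ 0 := by
      have := hδ i hi
      rw [Nat.add_sub_cancel] at ih
      linarith
    exact mul_nonpos_of_nonneg_of_nonpos (hb i hi).le
      (nonpos_of_mul_nonpos_right hci (hc i h0 hi))

theorem eq_sub_mul_of_tridiagonal (hk : 0 < k - θ) (hu₀ : 0 < u 0)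
    (hb : ∀ i < D, 0 < b i) (hbD : b D = 0)
    (hc₀ : c 0 = 0) (hc : ∀ i, 0 < i → i < D → 0 < c i)
    (hmono : ∀ i < D, k - θ ≤ c (i + 1) - b (i + 1) - (c i - b i))
    (hu : ∀ i ≤ D, c i * u (i - 1) + (k - b i - c i) * u i + b i * u (i + 1) = θ * u i)
    (i : ℕ) (hi : i ≤ D) : u i = u 0 - i * (u 0 - u 1) := by
  rcases D.eq_zero_or_pos with rfl | hD
  · obtain rfl := Nat.le_zero.1 hi
    simp
  set δ : ℕ → ℝ := fun i ↦ u i - u (i + 1) with hδdef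
  have hδ : ∀ i < D, b (i + 1) * (δ (i + 1) - δ i) =
      c i * (δ i - δ (i - 1)) + (c (i + 1) - b (i + 1) - (c i - b i) - (k - θ)) * δ i := by
    intro i hi
    have h₁ := hu i hi.le
    have h₂ := hu (i + 1) hi
    rcases i with _ | i <;> simp only [hδdef, hc₀, Nat.add_sub_cancel] at h₁ h₂ ⊢ <;>
      linear_combination h₁ - h₂
  have hδ₀ : 0 < δ 0 := by
    have h : b 0 * δ 0 = (k - θ) * u 0 := by
      have := hu 0 (Nat.zero_le D)
      rw [hc₀] at this
      linear_combination -this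
    exact (pos_iff_pos_of_mul_pos (h ▸ mul_pos hk hu₀)).1 (hb 0 hD)
  have hc_nonneg : ∀ i < D, 0 ≤ c i := fun i hi ↦
    i.eq_zero_or_pos.elim (fun h₀ ↦ h₀ ▸ hc₀.ge) fun h₀ ↦ (hc i h₀ hi).le
  have hup := pred_le_and_pos_of_tridiagonal hb hc_nonneg hmono hδ₀ hδ
  have hdown := le_pred_of_tridiagonal hb hbD hc hmono (fun i hi ↦ (hup i hi).2) hδ
  have hconst : ∀ i < D, δ i = δ 0 := by
    intro i
    induction i with
    | zero => exact fun _ ↦ rfl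
    | succ i ih =>
      exact fun hi ↦ (le_antisymm (hdown _ hi) (hup _ hi).1).trans (ih (by omega))
  exact eq_sub_mul_of_sub_succ_eq hconst i hi

end Tridiagonal

section Graph

variable {V : Type*} {G : SimpleGraph V}

theorem exists_dist_eq_and_dist_eq_sub (hG : G.Connected) {x y : V} {i : ℕ}
    (hi : i ≤ G.dist x y) : ∃ z, G.dist x z = i ∧ G.dist z y = G.dist x y - i := by
  obtain ⟨w, hw⟩ := hG.exists_walk_length_eq_dist x y
  refine ⟨w.getVert i, ?_, ?_⟩
  · rw [← SimpleGraph.length_eq_dist_of_subwalk hw (w.isSubwalk_take i)]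
    simp [hw, hi]
  · rw [← SimpleGraph.length_eq_dist_of_subwalk hw (w.isSubwalk_drop i)]
    simp [hw]

theorem dist_triangle_three (hG : G.Connected) (x y z : V) :
    G.dist x y ≤ G.dist x z + G.dist y z ∧ G.dist x z ≤ G.dist x y + G.dist y z ∧
      G.dist y z ≤ G.dist x y + G.dist x z := by
  refine ⟨?_, hG.dist_triangle, ?_⟩
  · rw [G.dist_comm (u := y)]
    exact hG.dist_triangle
  · rw [G.dist_comm (u := x) (v := y)]
    exact hG.dist_triangle

theorem dist_eq_two (hG : G.Connected) {x y z : V} (hxy : G.Adj x y) (hyz : G.Adj y z)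
    (hxz : ¬G.Adj x z) (hne : x ≠ z) : G.dist x z = 2 := by
  have hlt := hG.one_lt_dist_of_ne_of_not_adj hne hxz
  have hle : G.dist x z ≤ G.dist x y + G.dist y z := hG.dist_triangle
  rw [SimpleGraph.dist_eq_one_iff_adj.2 hxy, SimpleGraph.dist_eq_one_iff_adj.2 hyz] at hle
  omega

/-- The distance-`i` matrix `Aᵢ` of a graph. -/
noncomputable def distMatrix (G : SimpleGraph V) (i : ℕ) : Matrix V V ℝ :=
  Matrix.of fun x y ↦ if G.dist x y = i then 1 else 0

theorem distMatrix_apply (i : ℕ) (x y : V) :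
    distMatrix G i x y = if G.dist x y = i then 1 else 0 := rfl

theorem transpose_distMatrix (i : ℕ) : (distMatrix G i).transpose = distMatrix G i := by
  ext x y
  simp only [Matrix.transpose_apply, distMatrix_apply, G.dist_comm]

theorem distMatrix_zero [DecidableEq V] (hG : G.Connected) : distMatrix G 0 = 1 := by
  ext x y
  simp only [distMatrix_apply, hG.dist_eq_zero_iff, Matrix.one_apply]

theorem distMatrix_one [DecidableRel G.Adj] : distMatrix G 1 = G.adjMatrix ℝ := by
  ext x y
  simp only [distMatrix_apply, SimpleGraph.dist_eq_one_iff_adj, SimpleGraph.adjMatrix_apply]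

end Graph

section IntersectionNumbers

variable (D : ℕ) (p : ℕ → ℕ → ℕ → ℕ)

/-- The intersection number `p^h_{ij}` as a real number. `IsDRG` leaves `p h i j` unconstrained
outside `0, …, D`; for `i > D` or `j > D` this is the true count `0`. -/
noncomputable def interNum (h i j : ℕ) : ℝ := if i ≤ D ∧ j ≤ D then p h i j else 0

/-- The number `kᵢ = p⁰_{ii}` of vertices at distance `i` from a given vertex. -/
noncomputable def kNum (i : ℕ) : ℝ := interNum D p 0 i i

/-- The intersection number `cᵢ`; truncated subtraction gives the usual `c₀ = p⁰_{10} = 0`. -/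
noncomputable def cNum (i : ℕ) : ℝ := interNum D p i 1 (i - 1)

/-- The intersection number `aᵢ`. -/
noncomputable def aNum (i : ℕ) : ℝ := interNum D p i 1 i

/-- The intersection number `bᵢ`, with `b_D = 0`. -/
noncomputable def bNum (i : ℕ) : ℝ := interNum D p i 1 (i + 1)

variable {D p}

theorem interNum_eq_cast {h i j : ℕ} (hi : i ≤ D) (hj : j ≤ D) : interNum D p h i j = p h i j :=
  if_pos ⟨hi, hj⟩

theorem bNum_diam : bNum D p D = 0 := if_neg (by omega)

end IntersectionNumbers

namespace IsDRG

variable {V : Type*} [Fintype V] {G : SimpleGraph V} {D : ℕ} {p : ℕ → ℕ → ℕ → ℕ}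

theorem exists_dist_eq_of_le (H : IsDRG G D p) {i : ℕ} (hi : i ≤ D) :
    ∃ x y : V, G.dist x y = i := by
  obtain ⟨x, y, hxy⟩ := H.exists_dist_eq
  obtain ⟨z, hz, -⟩ := exists_dist_eq_and_dist_eq_sub H.connected (hxy ▸ hi)
  exact ⟨x, z, hz⟩

theorem sum_ite_dist (H : IsDRG G D p) (x y : V) (i j : ℕ) :
    ∑ z, (if G.dist x z = i ∧ G.dist y z = j then 1 else 0) = interNum D p (G.dist x y) i j := by
  classical
  by_cases hij : i ≤ D ∧ j ≤ D
  · rw [interNum_eq_cast hij.1 hij.2, ← H.inter _ i j (H.dist_le x y) hij.1 hij.2 x y rfl,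
      Set.ncard_eq_toFinset_card', Set.toFinset_ofPred, Finset.sum_boole]
  · rw [interNum, if_neg hij]
    refine Finset.sum_eq_zero fun z _ ↦ if_neg ?_
    rintro ⟨rfl, rfl⟩
    exact hij ⟨H.dist_le x z, H.dist_le y z⟩

theorem distMatrix_mul_apply (H : IsDRG G D p) (i j : ℕ) (x y : V) :
    (distMatrix G i * distMatrix G j) x y = interNum D p (G.dist x y) i j := by
  rw [← H.sum_ite_dist, Matrix.mul_apply]
  refine Finset.sum_congr rfl fun z _ ↦ ?_
  simp only [distMatrix_apply, G.dist_comm (u := z) (v := y), ite_zero_mul_ite_zero, mul_one]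

theorem interNum_comm (H : IsDRG G D p) {h : ℕ} (hh : h ≤ D) (i j : ℕ) :
    interNum D p h i j = interNum D p h j i := by
  obtain ⟨x, y, rfl⟩ := H.exists_dist_eq_of_le hh
  rw [← H.sum_ite_dist, G.dist_comm, ← H.sum_ite_dist]
  simp only [and_comm]

theorem distMatrix_eq_zero (H : IsDRG G D p) {i : ℕ} (hi : D < i) : distMatrix G i = 0 := by
  ext x y
  exact if_neg ((H.dist_le x y).trans_lt hi).ne

theorem distMatrix_mul_comm (H : IsDRG G D p) (i j : ℕ) :
    distMatrix G i * distMatrix G j = distMatrix G j * distMatrix G i := by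
  ext x y
  rw [H.distMatrix_mul_apply, H.distMatrix_mul_apply, H.interNum_comm (H.dist_le x y)]

theorem interNum_pos (H : IsDRG G D p) (x y z : V) :
    0 < interNum D p (G.dist x y) (G.dist x z) (G.dist y z) := by
  rw [← H.sum_ite_dist]
  exact Finset.sum_pos' (fun _ _ ↦ by positivity) ⟨z, Finset.mem_univ z, by simp⟩

theorem interNum_eq_zero (H : IsDRG G D p) {h i j : ℕ} (hh : h ≤ D)
    (hij : i + j < h ∨ h + i < j ∨ h + j < i) : interNum D p h i j = 0 := by
  obtain ⟨x, y, rfl⟩ := H.exists_dist_eq_of_le hh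
  rw [← H.sum_ite_dist]
  refine Finset.sum_eq_zero fun z _ ↦ if_neg ?_
  rintro ⟨rfl, rfl⟩
  have htriangle := dist_triangle_three H.connected x y z
  omega

theorem cNum_zero (H : IsDRG G D p) : cNum D p 0 = 0 :=
  H.interNum_eq_zero D.zero_le (by omega)

theorem aNum_zero (H : IsDRG G D p) : aNum D p 0 = 0 :=
  H.interNum_eq_zero D.zero_le (by omega)

theorem kNum_zero (H : IsDRG G D p) : kNum D p 0 = 1 := by
  classical
  obtain ⟨x, -⟩ := H.exists_dist_eq
  have h := H.distMatrix_mul_apply 0 0 x x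
  rwa [distMatrix_zero H.connected, mul_one, Matrix.one_apply_eq, G.dist_self, eq_comm] at h

theorem cNum_one (H : IsDRG G D p) (hD : 1 ≤ D) : cNum D p 1 = 1 := by
  classical
  obtain ⟨x, y, hxy⟩ := H.exists_dist_eq_of_le hD
  have h := H.distMatrix_mul_apply 1 0 x y
  rwa [distMatrix_zero H.connected, mul_one, distMatrix_apply, hxy, if_pos rfl, eq_comm] at h

theorem kNum_pos (H : IsDRG G D p) {i : ℕ} (hi : i ≤ D) : 0 < kNum D p i := by
  obtain ⟨x, y, rfl⟩ := H.exists_dist_eq_of_le hi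
  have h := H.interNum_pos x x y
  rwa [G.dist_self] at h

theorem cNum_pos (H : IsDRG G D p) {i : ℕ} (hi₀ : 0 < i) (hi : i ≤ D) : 0 < cNum D p i := by
  obtain ⟨x, y, rfl⟩ := H.exists_dist_eq_of_le hi
  obtain ⟨z, hxz, hzy⟩ := exists_dist_eq_and_dist_eq_sub H.connected (Nat.succ_le_of_lt hi₀)
  have h := H.interNum_pos x y z
  rwa [G.dist_comm (u := y), hxz, hzy] at h

theorem bNum_pos (H : IsDRG G D p) {i : ℕ} (hi : i < D) : 0 < bNum D p i := by
  obtain ⟨x, y, hxy⟩ := H.exists_dist_eq_of_le (i := i + 1) hi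
  obtain ⟨z, hxz, hzy⟩ := exists_dist_eq_and_dist_eq_sub H.connected (i.le_succ.trans_eq hxy.symm)
  have h := H.interNum_pos z x y
  rwa [G.dist_comm (u := z) (v := x), hxz, hzy, hxy, Nat.add_sub_cancel_left] at h

theorem cNum_add_aNum_add_bNum (H : IsDRG G D p) {i : ℕ} (hi : i ≤ D) :
    cNum D p i + aNum D p i + bNum D p i = kNum D p 1 := by
  obtain ⟨x, y, rfl⟩ := H.exists_dist_eq_of_le hi
  rw [kNum, ← G.dist_self (v := x), ← H.sum_ite_dist, cNum, aNum, bNum, ← H.sum_ite_dist,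
    ← H.sum_ite_dist, ← H.sum_ite_dist, ← Finset.sum_add_distrib, ← Finset.sum_add_distrib]
  refine Finset.sum_congr rfl fun z _ ↦ ?_
  have htriangle := dist_triangle_three H.connected x y z
  split_ifs <;> first | omega | norm_num

theorem kNum_mul_interNum (H : IsDRG G D p) (h i j : ℕ) :
    kNum D p h * interNum D p h i j = kNum D p i * interNum D p i h j := by
  obtain ⟨x, -⟩ := H.exists_dist_eq
  -- Both sides count the pairs `(y, z)` with `d(x,y) = h`, `d(x,z) = i` and `d(y,z) = j`.
  have hdiag : ∀ h i j : ℕ, (distMatrix G i * distMatrix G j * distMatrix G h) x x =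
      kNum D p h * interNum D p h i j := by
    intro h i j
    rw [kNum, ← G.dist_self (v := x), ← H.sum_ite_dist, Finset.sum_mul, Matrix.mul_apply]
    refine Finset.sum_congr rfl fun y _ ↦ ?_
    rw [H.distMatrix_mul_apply, distMatrix_apply, G.dist_comm (u := y)]
    simp only [and_self]
    split_ifs with hy
    · rw [hy, mul_comm]
    · simp
  have htranspose : (distMatrix G i * distMatrix G j * distMatrix G h).transpose =
      distMatrix G h * distMatrix G j * distMatrix G i := by
    simp only [Matrix.transpose_mul, transpose_distMatrix, mul_assoc]
  rw [← hdiag, ← hdiag, ← htranspose, Matrix.transpose_apply]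

theorem kNum_mul_bNum (H : IsDRG G D p) {i : ℕ} (hi : i < D) :
    kNum D p i * bNum D p i = kNum D p (i + 1) * cNum D p (i + 1) := by
  rw [bNum, cNum, H.interNum_comm hi.le, H.interNum_comm hi, Nat.add_sub_cancel]
  exact H.kNum_mul_interNum i (i + 1) 1

theorem distMatrix_one_mul_succ (H : IsDRG G D p) (i : ℕ) :
    distMatrix G 1 * distMatrix G (i + 1) = bNum D p i • distMatrix G i +
      aNum D p (i + 1) • distMatrix G (i + 1) + cNum D p (i + 2) • distMatrix G (i + 2) := by
  ext x y
  simp only [H.distMatrix_mul_apply, Matrix.add_apply, Matrix.smul_apply, distMatrix_apply,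
    smul_eq_mul, mul_ite, mul_one, mul_zero]
  have hle := H.dist_le x y
  generalize G.dist x y = h at hle ⊢
  by_cases h₀ : h = i
  · subst h₀
    simp [bNum]
  by_cases h₁ : h = i + 1
  · subst h₁
    simp [aNum]
  by_cases h₂ : h = i + 2
  · subst h₂
    simp [cNum]
  rw [H.interNum_eq_zero hle (by omega), if_neg h₀, if_neg h₁, if_neg h₂]
  simp

theorem interNum_recurrence (H : IsDRG G D p) {h : ℕ} (hh : h ≤ D) (i j : ℕ) :
    bNum D p i * interNum D p h i (j + 1) + aNum D p (i + 1) * interNum D p h (i + 1) (j + 1) +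
        cNum D p (i + 2) * interNum D p h (i + 2) (j + 1) =
      bNum D p j * interNum D p h (i + 1) j + aNum D p (j + 1) * interNum D p h (i + 1) (j + 1) +
        cNum D p (j + 2) * interNum D p h (i + 1) (j + 2) := by
  obtain ⟨x, y, rfl⟩ := H.exists_dist_eq_of_le hh
  have hassoc : distMatrix G 1 * distMatrix G (i + 1) * distMatrix G (j + 1) =
      distMatrix G (i + 1) * (distMatrix G 1 * distMatrix G (j + 1)) := by
    rw [H.distMatrix_mul_comm 1 (i + 1), mul_assoc]
  rw [H.distMatrix_one_mul_succ i, H.distMatrix_one_mul_succ j] at hassoc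
  simpa only [add_mul, mul_add, smul_mul_assoc, mul_smul_comm, Matrix.add_apply, Matrix.smul_apply,
    H.distMatrix_mul_apply, smul_eq_mul] using congr_fun₂ hassoc x y

section Terwilliger

theorem cNum_two_mul_interNum_add_two (H : IsDRG G D p) {r : ℕ} (hr : r ≤ D) :
    cNum D p 2 * interNum D p r 2 (r + 2) = bNum D p r * bNum D p (r + 1) := by
  have h := H.interNum_recurrence hr 0 (r + 1)
  rw [H.interNum_eq_zero (i := 0) (j := r + 1 + 1) hr (by omega),
    H.interNum_eq_zero (i := 0 + 1) (j := r + 1 + 1) hr (by omega),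
    H.interNum_eq_zero (i := 0 + 1) (j := r + 1 + 2) hr (by omega)] at h
  simp only [bNum] at h ⊢
  linear_combination h

theorem cNum_two_mul_interNum_add_one (H : IsDRG G D p) {r : ℕ} (hr : r ≤ D) :
    cNum D p 2 * interNum D p r 2 (r + 1) =
      bNum D p r * (aNum D p r + aNum D p (r + 1) - aNum D p 1) := by
  have h := H.interNum_recurrence hr 0 r
  rw [H.interNum_eq_zero (i := 0) (j := r + 1) hr (by omega),
    H.interNum_eq_zero (i := 0 + 1) (j := r + 2) hr (by omega)] at h
  simp only [bNum, aNum] at h ⊢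
  linear_combination h

-- The five conditions on the left exclude each other, and each of them makes the distance step
-- from `n + 1` to `n + 2` on one of the edges `w₁w₂`, `w₂w₃`.
theorem quadrangle_ite_le {d₁ d₂ d₃ d₄ : ℕ} (n : ℕ) (h₁₂ : d₁ ≤ d₂ + 1 ∧ d₂ ≤ d₁ + 1)
    (h₂₃ : d₂ ≤ d₃ + 1 ∧ d₃ ≤ d₂ + 1) (h₃₄ : d₃ ≤ d₄ + 1 ∧ d₄ ≤ d₃ + 1)
    (h₄₁ : d₄ ≤ d₁ + 1 ∧ d₁ ≤ d₄ + 1) :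
    (if d₁ = n + 1 ∧ d₃ = n + 2 then (1 : ℝ) else 0) + (if d₁ = n ∧ d₃ = n + 2 then 1 else 0) +
        (if d₁ = n + 1 ∧ d₃ = n + 3 then 1 else 0) + (if d₂ = n + 1 ∧ d₄ = n + 3 then 1 else 0) +
        (if d₄ = n ∧ d₂ = n + 2 then 1 else 0) ≤
      (if d₁ = n + 1 ∧ d₂ = n + 2 then 1 else 0) + (if d₂ = n + 1 ∧ d₃ = n + 2 then 1 else 0) := by
  split_ifs <;> first | (exfalso; omega) | norm_num

variable {w₁ w₂ w₃ w₄ : V}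

theorem interNum_le_of_quadrangle (H : IsDRG G D p) (h₁₂ : G.Adj w₁ w₂) (h₂₃ : G.Adj w₂ w₃)
    (h₃₄ : G.Adj w₃ w₄) (h₄₁ : G.Adj w₄ w₁) (h₁₃ : G.dist w₁ w₃ = 2) (h₂₄ : G.dist w₂ w₄ = 2)
    (n : ℕ) :
    interNum D p 2 (n + 1) (n + 2) + 2 * interNum D p 2 n (n + 2) +
      2 * interNum D p 2 (n + 1) (n + 3) ≤ 2 * interNum D p 1 (n + 1) (n + 2) := by
  have hedge : ∀ {x y : V}, G.Adj x y → ∀ z,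
      G.dist x z ≤ G.dist y z + 1 ∧ G.dist y z ≤ G.dist x z + 1 := by
    intro x y hxy z
    have h := hxy.diff_dist_adj (u := z)
    rw [G.dist_comm (u := z), G.dist_comm (u := z)] at h
    omega
  have hsum := Finset.sum_le_sum fun z (_ : z ∈ Finset.univ) ↦
    quadrangle_ite_le n (hedge h₁₂ z) (hedge h₂₃ z) (hedge h₃₄ z) (hedge h₄₁ z)
  simp only [Finset.sum_add_distrib, H.sum_ite_dist, h₁₃, h₂₄, G.dist_comm (u := w₄) (v := w₂),
    SimpleGraph.dist_eq_one_iff_adj.2 h₁₂, SimpleGraph.dist_eq_one_iff_adj.2 h₂₃] at hsum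
  linarith

theorem kNum_one_mul_bNum_one_mul_interNum_two (H : IsDRG G D p) (hD : 2 ≤ D) (i j : ℕ) :
    kNum D p 1 * bNum D p 1 * interNum D p 2 i j =
      kNum D p i * (cNum D p 2 * interNum D p i 2 j) := by
  linear_combination interNum D p 2 i j * H.kNum_mul_bNum (i := 1) hD +
    cNum D p 2 * H.kNum_mul_interNum 2 i j

theorem aNum_add_aNum_add_two_mul_le (H : IsDRG G D p) (h₁₂ : G.Adj w₁ w₂) (h₂₃ : G.Adj w₂ w₃)
    (h₃₄ : G.Adj w₃ w₄) (h₄₁ : G.Adj w₄ w₁) (h₁₃ : G.dist w₁ w₃ = 2) (h₂₄ : G.dist w₂ w₄ = 2)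
    {n : ℕ} (hn : n + 1 < D) :
    aNum D p (n + 1) + aNum D p (n + 2) - aNum D p 1 + 2 * cNum D p (n + 1) +
      2 * bNum D p (n + 2) ≤ 2 * bNum D p 1 := by
  have hD : 2 ≤ D := by omega
  have hpos : 0 < kNum D p (n + 1) * bNum D p (n + 1) := mul_pos (H.kNum_pos hn.le) (H.bNum_pos hn)
  have hquad := mul_le_mul_of_nonneg_left
    (H.interNum_le_of_quadrangle h₁₂ h₂₃ h₃₄ h₄₁ h₁₃ h₂₄ n)
    (mul_pos (H.kNum_pos (i := 1) (by omega)) (H.bNum_pos (i := 1) hD)).le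
  have e₁ : kNum D p 1 * interNum D p 1 (n + 1) (n + 2) = kNum D p (n + 1) * bNum D p (n + 1) :=
    H.kNum_mul_interNum 1 (n + 1) (n + 2)
  have e₂ : kNum D p 1 * bNum D p 1 * interNum D p 2 (n + 1) (n + 2) =
      kNum D p (n + 1) * bNum D p (n + 1) *
        (aNum D p (n + 1) + aNum D p (n + 2) - aNum D p 1) := by
    rw [H.kNum_one_mul_bNum_one_mul_interNum_two hD, H.cNum_two_mul_interNum_add_one hn.le,
      mul_assoc]
  have e₃ : kNum D p 1 * bNum D p 1 * interNum D p 2 n (n + 2) =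
      kNum D p (n + 1) * bNum D p (n + 1) * cNum D p (n + 1) := by
    rw [H.kNum_one_mul_bNum_one_mul_interNum_two hD, H.cNum_two_mul_interNum_add_two (by omega)]
    linear_combination bNum D p (n + 1) * H.kNum_mul_bNum (i := n) (by omega)
  have e₄ : kNum D p 1 * bNum D p 1 * interNum D p 2 (n + 1) (n + 3) =
      kNum D p (n + 1) * bNum D p (n + 1) * bNum D p (n + 2) := by
    rw [H.kNum_one_mul_bNum_one_mul_interNum_two hD, H.cNum_two_mul_interNum_add_two hn.le,
      mul_assoc]
  refine le_of_mul_le_mul_left ?_ hpos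
  linear_combination hquad - e₂ - 2 * e₃ - 2 * e₄ + 2 * bNum D p 1 * e₁

theorem terwilliger_inequality (H : IsDRG G D p) (h₁₂ : G.Adj w₁ w₂) (h₂₃ : G.Adj w₂ w₃)
    (h₃₄ : G.Adj w₃ w₄) (h₄₁ : G.Adj w₄ w₁) (h₁₃ : G.dist w₁ w₃ = 2) (h₂₄ : G.dist w₂ w₄ = 2)
    {i : ℕ} (hi : i < D) :
    aNum D p 1 + 2 ≤ cNum D p (i + 1) - bNum D p (i + 1) - (cNum D p i - bNum D p i) := by
  have hrow₁ := H.cNum_add_aNum_add_bNum (i := 1) (by omega)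
  have hc₁ := H.cNum_one (by omega)
  have hrow := H.cNum_add_aNum_add_bNum hi.le
  rcases i with _ | n
  · have := H.cNum_zero
    have := H.aNum_zero
    rw [zero_add]
    linarith
  have hrow' := H.cNum_add_aNum_add_bNum (i := n + 2) hi
  have := H.aNum_add_aNum_add_two_mul_le h₁₂ h₂₃ h₃₄ h₄₁ h₁₃ h₂₄ hi
  linarith

end Terwilliger

section Eigenvector

variable {θ : ℝ} {v : V → ℝ} {u : ℕ → ℝ}

theorem cNum_smul_distMatrix_mulVec (H : IsDRG G D p) (hv : (distMatrix G 1).mulVec v = θ • v)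
    {i : ℕ} {s t : ℝ} (hs : (distMatrix G i).mulVec v = s • v)
    (ht : (distMatrix G (i + 1)).mulVec v = t • v) :
    cNum D p (i + 2) • (distMatrix G (i + 2)).mulVec v =
      ((θ - aNum D p (i + 1)) * t - bNum D p i * s) • v := by
  have h := congr_arg (·.mulVec v) (H.distMatrix_one_mul_succ i)
  simp only [← Matrix.mulVec_mulVec, Matrix.add_mulVec, Matrix.smul_mulVec, Matrix.mulVec_smul,
    hs, ht, hv] at h
  rw [← sub_eq_iff_eq_add'] at h
  rw [← h]
  module

theorem distMatrix_mulVec_eigenvector (H : IsDRG G D p) (hv : (distMatrix G 1).mulVec v = θ • v)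
    (hu₀ : u 0 = 1)
    (hu : ∀ i < D, cNum D p i * u (i - 1) + aNum D p i * u i + bNum D p i * u (i + 1) = θ * u i)
    (i : ℕ) (hi : i ≤ D) : (distMatrix G i).mulVec v = (kNum D p i * u i) • v := by
  classical
  induction i using Nat.twoStepInduction with
  | zero => rw [distMatrix_zero H.connected, Matrix.one_mulVec, H.kNum_zero, hu₀, mul_one, one_smul]
  | one =>
    have h : bNum D p 0 * u 1 = θ := by
      simpa [H.cNum_zero, H.aNum_zero, hu₀] using hu 0 hi
    rw [hv, ← h]
    rfl
  | more i ih₀ ih₁ =>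
    have h := H.cNum_smul_distMatrix_mulVec hv (ih₀ (by omega)) (ih₁ (by omega))
    have hscalar : (θ - aNum D p (i + 1)) * (kNum D p (i + 1) * u (i + 1)) -
        bNum D p i * (kNum D p i * u i) = cNum D p (i + 2) * (kNum D p (i + 2) * u (i + 2)) := by
      have hui := hu (i + 1) hi
      have hki := H.kNum_mul_bNum (i := i) (by omega)
      have hki' := H.kNum_mul_bNum hi
      rw [Nat.add_sub_cancel] at hui
      linear_combination -kNum D p (i + 1) * hui - u i * hki + u (i + 2) * hki'
    rw [hscalar, mul_smul] at h
    exact smul_right_injective _ (H.cNum_pos (by omega) hi).ne' h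

theorem recurrence_of_isAdjEigenval [DecidableRel G.Adj] (H : IsDRG G D p) (hD : 0 < D)
    (hθ : IsAdjEigenval G θ) (hu₀ : u 0 = 1)
    (hu : ∀ i < D, cNum D p i * u (i - 1) + aNum D p i * u i + bNum D p i * u (i + 1) = θ * u i)
    (i : ℕ) (hi : i ≤ D) :
    cNum D p i * u (i - 1) + aNum D p i * u i + bNum D p i * u (i + 1) = θ * u i := by
  rcases hi.lt_or_eq with hi | rfl
  · exact hu i hi
  obtain ⟨v, hv₀, hv⟩ := hθ
  obtain ⟨d, rfl⟩ := Nat.exists_eq_succ_of_ne_zero hD.ne'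
  rw [← distMatrix_one] at hv
  have hA := H.distMatrix_mulVec_eigenvector hv hu₀ hu
  have h := H.cNum_smul_distMatrix_mulVec hv (hA d (by omega)) (hA (d + 1) le_rfl)
  rw [H.distMatrix_eq_zero (Nat.lt_succ_self _), Matrix.zero_mulVec, smul_zero, eq_comm,
    smul_eq_zero_iff_left hv₀] at h
  have hk := H.kNum_mul_bNum (i := d) (by omega)
  refine mul_left_cancel₀ (H.kNum_pos le_rfl).ne' ?_
  rw [Nat.succ_eq_add_one, bNum_diam, Nat.add_sub_cancel]
  linear_combination -h - u d * hk

end Eigenvector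

theorem recurrence_of_isStdSeq (H : IsDRG G D p) {θ : ℝ} {u : ℕ → ℝ} (hu : IsStdSeq D p θ u)
    (i : ℕ) (hi : i < D) :
    cNum D p i * u (i - 1) + aNum D p i * u i + bNum D p i * u (i + 1) = θ * u i := by
  obtain ⟨hu₀, hu₁, hrec⟩ := hu
  rcases i.eq_zero_or_pos with rfl | h₀
  · have hk : kNum D p 1 = p 0 1 1 := interNum_eq_cast hi hi
    have hk₀ : (p 0 1 1 : ℝ) ≠ 0 := hk ▸ (H.kNum_pos hi).ne'
    rw [H.cNum_zero, H.aNum_zero, zero_add, hu₀, hu₁]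
    change _ + kNum D p 1 * _ = _
    rw [hk]
    field_simp
    ring
  · rw [← hrec i h₀ (by omega), cNum, aNum, bNum, interNum_eq_cast (by omega) (by omega),
      interNum_eq_cast (by omega) (by omega), interNum_eq_cast (by omega) (by omega)]

theorem eq_sub_mul_of_isAdjEigenval [DecidableRel G.Adj] (H : IsDRG G D p) (hD : 0 < D) {θ : ℝ}
    {u : ℕ → ℝ} (hθk : 0 < kNum D p 1 - θ) (hθ : IsAdjEigenval G θ) (hu : IsStdSeq D p θ u)
    (hmono : ∀ i < D,
      kNum D p 1 - θ ≤ cNum D p (i + 1) - bNum D p (i + 1) - (cNum D p i - bNum D p i)) :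
    ∀ i ≤ D, u i = u 0 - i * (u 0 - u 1) := by
  refine eq_sub_mul_of_tridiagonal (b := bNum D p) (c := cNum D p) hθk (hu.1 ▸ one_pos)
    (fun _ ↦ H.bNum_pos) bNum_diam H.cNum_zero (fun _ h₀ hi ↦ H.cNum_pos h₀ hi.le) hmono
    fun i hi ↦ ?_
  rw [← H.cNum_add_aNum_add_bNum hi,
    ← H.recurrence_of_isAdjEigenval hD hθ hu.1 (H.recurrence_of_isStdSeq hu) i hi]
  ring

end IsDRG

theorem isClassicalQType_one_of_eq_sub_mul {D : ℕ} {u : ℕ → ℝ} {d : ℝ}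
    (hu : ∀ i ≤ D, u i = u 0 - i * d) : IsClassicalQType D 1 u := by
  refine ⟨-d, fun i h₁ hi ↦ ?_⟩
  rw [hu i hi, hu (i - 1) (by omega), Nat.cast_sub h₁]
  push_cast
  ring

theorem stmt13_general {V : Type*} [Fintype V] (G : SimpleGraph V) [DecidableRel G.Adj]
    (D : ℕ) (p : ℕ → ℕ → ℕ → ℕ) (hdrg : IsDRG G D p) (θ : ℝ) (hθ : IsAdjEigenval G θ)
    (u : ℕ → ℝ) (hu : IsStdSeq D p θ u)
    (w₁ w₂ w₃ w₄ : V) (h12 : G.Adj w₁ w₂) (h23 : G.Adj w₂ w₃) (h34 : G.Adj w₃ w₄)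
    (h41 : G.Adj w₄ w₁) (h13 : ¬ G.Adj w₁ w₃) (h24 : ¬ G.Adj w₂ w₄)
    (hne13 : w₁ ≠ w₃) (hne24 : w₂ ≠ w₄) (hθb : θ = (p 1 1 2 : ℝ) - 1) :
    (∀ i : ℕ, i ≤ D → u i = 1 - (i : ℝ) * ((p 1 1 1 : ℝ) + 2) / (p 0 1 1 : ℝ)) ∧
      IsClassicalQType D 1 u := by
  have hw₁₃ := dist_eq_two hdrg.connected h12 h23 h13 hne13
  have hw₂₄ := dist_eq_two hdrg.connected h23 h34 h24 hne24
  have hD : 2 ≤ D := hw₁₃ ▸ hdrg.dist_le w₁ w₃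
  have hk : kNum D p 1 = p 0 1 1 := interNum_eq_cast (by omega) (by omega)
  have ha₁ : aNum D p 1 = p 1 1 1 := interNum_eq_cast (by omega) (by omega)
  have hgap : kNum D p 1 - θ = aNum D p 1 + 2 := by
    have hb₁ : bNum D p 1 = p 1 1 2 := interNum_eq_cast (by omega) hD
    linarith [hdrg.cNum_add_aNum_add_bNum (i := 1) (by omega), hdrg.cNum_one (by omega)]
  have hlin : ∀ i ≤ D, u i = u 0 - i * (u 0 - u 1) :=
    hdrg.eq_sub_mul_of_isAdjEigenval (by omega) (by rw [hgap, ha₁]; positivity) hθ hu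
      fun _ hi ↦ hgap ▸ hdrg.terwilliger_inequality h12 h23 h34 h41 hw₁₃ hw₂₄ hi
  have hstep : u 0 - u 1 = (p 1 1 1 + 2) / p 0 1 1 := by
    have hk₀ : (p 0 1 1 : ℝ) ≠ 0 := hk ▸ (hdrg.kNum_pos (by omega)).ne'
    rw [hu.1, hu.2.1, ← ha₁, ← hgap, hk, sub_div, div_self hk₀]
  refine ⟨fun i hi ↦ ?_, isClassicalQType_one_of_eq_sub_mul hlin⟩
  rw [hlin i hi, hstep, hu.1, mul_div_assoc]

/-- Let `Γ` be a distance-regular graph of diameter `D` with `c₁ = 1`, valency `k`, and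
second largest distinct adjacency eigenvalue `θ₁`. If `Γ` contains an induced quadrangle
and `θ₁ = b₁ - 1`, then the standard sequence of `θ₁` satisfies
`uᵢ = 1 - i(a₁+2)/k` for `0 ≤ i ≤ D`, and hence `θ₁` is of classical `1`-type. -/
theorem stmt13 {V : Type*} [Fintype V] (G : SimpleGraph V) [DecidableRel G.Adj]
    (D : ℕ) (p : ℕ → ℕ → ℕ → ℕ) (hdrg : IsDRG G D p)
    (hc1 : p 1 1 0 = 1)
    (θ₁ : ℝ) (hθ₁ : IsAdjEigenval G θ₁) (hθ₁k : θ₁ ≠ (p 0 1 1 : ℝ))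
    (hθ₁max : ∀ η : ℝ, IsAdjEigenval G η → η ≠ (p 0 1 1 : ℝ) → η ≤ θ₁)
    (u : ℕ → ℝ) (hu : IsStdSeq D p θ₁ u)
    (w₁ w₂ w₃ w₄ : V) (h12 : G.Adj w₁ w₂) (h23 : G.Adj w₂ w₃) (h34 : G.Adj w₃ w₄)
    (h41 : G.Adj w₄ w₁) (h13 : ¬ G.Adj w₁ w₃) (h24 : ¬ G.Adj w₂ w₄)
    (hne13 : w₁ ≠ w₃) (hne24 : w₂ ≠ w₄)
    (hθ₁b : θ₁ = (p 1 1 2 : ℝ) - 1) :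
    (∀ i : ℕ, i ≤ D →
        u i = 1 - (i : ℝ) * ((p 1 1 1 : ℝ) + 2) / (p 0 1 1 : ℝ)) ∧
      IsClassicalQType D 1 u :=
  stmt13_general G D p hdrg θ₁ hθ₁ u hu w₁ w₂ w₃ w₄ h12 h23 h34 h41 h13 h24 hne13 hne24 hθ₁b
end

section
/- Let Γ be a distance-regular graph of diameter D ≥ 2, and let Δ be an induced subgraph of Γ on at least two vertices which is regular (as a graph) and such that any two vertices of Δ have distance at most two in Γ. If the q-distance matrix 𝔻_q of Γ has exactly one positive eigenvalue for some real number q > 0, then the smallest eigenvalue λ_min of the adjacency matrix of Δ satisfies λ_min ≥ −q − 1. -/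
/-- The `q`-distance matrix of a graph `G`: the `(x,y)` entry is
`∑_{j=0}^{d(x,y)-1} q^{-j}` (and `0` on the diagonal, since `d(x,x) = 0`). -/
noncomputable def qDistMatrix {V : Type*} [Fintype V] (G : SimpleGraph V) (q : ℝ) :
    Matrix V V ℝ :=
  Matrix.of fun x y => ∑ j ∈ Finset.range (G.dist x y), (1 / q) ^ j

/-- `θ` is an eigenvalue of the real matrix `M`. -/
def IsEigenval {n : Type*} [Fintype n] (M : Matrix n n ℝ) (θ : ℝ) : Prop :=
  ∃ v : n → ℝ, v ≠ 0 ∧ M.mulVec v = θ • v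

open Matrix

/-! The `q`-distance matrix restricted to `Δ` is `(1 + 1/q)(J - I) - (1/q)A`, where `A` is the
adjacency matrix of `Δ`. Having at most one positive eigenvalue is inherited by this principal
submatrix, in the form of a reversed Cauchy–Schwarz inequality: once the quadratic form is positive
at the all-ones vector `𝟙`, it is nonpositive on the vectors orthogonal to `𝟙` under the form. An
eigenvector of `A` for `μ` which is orthogonal to `𝟙` is an eigenvector of the submatrix for
`-(q + 1 + μ)/q`, so this number is not positive. All other eigenvectors of the regular graph `Δ`
belong to its valency. -/

section Matrix

variable {m n R 𝕜 : Type*} [Fintype m] [Fintype n]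

theorem dotProduct_eq_zero_or_eq_of_vecMul_eq_smul [CommRing R] [NoZeroDivisors R]
    {M : Matrix n n R} {z v : n → R} {d μ : R} (hz : z ᵥ* M = d • z) (hv : M *ᵥ v = μ • v) :
    z ⬝ᵥ v = 0 ∨ μ = d := by
  have h : (μ - d) * (z ⬝ᵥ v) = 0 := by
    rw [sub_mul, sub_eq_zero]
    calc μ * (z ⬝ᵥ v) = z ⬝ᵥ M *ᵥ v := by rw [hv, dotProduct_smul, smul_eq_mul]
      _ = d * (z ⬝ᵥ v) := by rw [dotProduct_mulVec, hz, smul_dotProduct, smul_eq_mul]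
  exact (mul_eq_zero.mp h).symm.imp_right sub_eq_zero.mp

theorem nontrivial_of_one_dotProduct_eq_zero [NonAssocSemiring R] {v : n → R} (hv : v ≠ 0)
    (hsum : 1 ⬝ᵥ v = 0) : Nontrivial n := by
  rw [← not_subsingleton_iff_nontrivial]
  intro h
  refine hv (funext fun a => ?_)
  rwa [one_dotProduct, Fintype.sum_subsingleton _ a] at hsum

theorem star_dotProduct_mulVec_eq_sum_eigenvalues [RCLike 𝕜] [DecidableEq n] {M : Matrix n n 𝕜}
    (hM : M.IsHermitian) (v : n → 𝕜) :
    star v ⬝ᵥ M *ᵥ v = ∑ i, (hM.eigenvalues i : 𝕜) *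
      (‖(star (hM.eigenvectorUnitary : Matrix n n 𝕜) *ᵥ v) i‖ : 𝕜) ^ 2 := by
  set U := (hM.eigenvectorUnitary : Matrix n n 𝕜)
  have hspec : M = U * diagonal (RCLike.ofReal ∘ hM.eigenvalues) * star U := by
    simpa only [Unitary.conjStarAlgAut_apply] using hM.spectral_theorem
  have hstar : star v ᵥ* U = star (star U *ᵥ v) := by
    rw [star_mulVec, star_eq_conjTranspose, conjTranspose_conjTranspose]
  have hdiag : star v ⬝ᵥ M *ᵥ v =
      star (star U *ᵥ v) ⬝ᵥ diagonal (RCLike.ofReal ∘ hM.eigenvalues) *ᵥ (star U *ᵥ v) := by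
    conv_lhs => rw [hspec, ← mulVec_mulVec, ← mulVec_mulVec, dotProduct_mulVec, hstar]
  rw [hdiag]
  refine Finset.sum_congr rfl fun i _ => ?_
  rw [mulVec_diagonal, Pi.star_apply, RCLike.star_def, mul_left_comm, RCLike.conj_mul,
    Function.comp_apply]

/-- A real symmetric matrix is hyperbolic if its quadratic form has at most one positive direction,
expressed as a reversed Cauchy–Schwarz inequality: where the form is positive at `z`, it is
nonpositive on the vectors orthogonal to `z` under the form. Unlike a count of eigenvalues, this
condition visibly passes to principal submatrices. Symmetry of `M` is not part of the definition. -/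
def IsHyperbolic (M : Matrix n n ℝ) : Prop :=
  ∀ ⦃z w : n → ℝ⦄, 0 < z ⬝ᵥ M *ᵥ z → z ⬝ᵥ M *ᵥ w = 0 → w ⬝ᵥ M *ᵥ w ≤ 0

theorem isHyperbolic_of_nonpos_of_dotProduct_eq_zero {M : Matrix n n ℝ} (hM : M.IsSymm)
    (c : n → ℝ) (hc : ∀ v, c ⬝ᵥ v = 0 → v ⬝ᵥ M *ᵥ v ≤ 0) : IsHyperbolic M := by
  intro z w hz hzw
  have hcz : 0 < (c ⬝ᵥ z) ^ 2 := sq_pos_of_ne_zero fun h => (hc z h).not_gt hz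
  set u := (c ⬝ᵥ z) • w - (c ⬝ᵥ w) • z with hu
  have hcu : c ⬝ᵥ u = 0 := by
    simp only [hu, dotProduct_sub, dotProduct_smul, smul_eq_mul]
    ring
  have hexpand : u ⬝ᵥ M *ᵥ u = (c ⬝ᵥ z) ^ 2 * (w ⬝ᵥ M *ᵥ w) + (c ⬝ᵥ w) ^ 2 * (z ⬝ᵥ M *ᵥ z) := by
    have hwz : w ⬝ᵥ M *ᵥ z = 0 := by rw [← dotProduct_transpose_mulVec, hM.eq, hzw]
    simp only [hu, mulVec_sub, mulVec_smul, sub_dotProduct, dotProduct_sub, smul_dotProduct,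
      dotProduct_smul, smul_eq_mul, hzw, hwz]
    ring
  have hle : (c ⬝ᵥ z) ^ 2 * (w ⬝ᵥ M *ᵥ w) ≤ 0 := by
    linarith [hc u hcu, mul_nonneg (sq_nonneg (c ⬝ᵥ w)) hz.le]
  exact nonpos_of_mul_nonpos_right hle hcz

theorem isHyperbolic_of_card_eigenvalues_pos_le_one [DecidableEq n] {M : Matrix n n ℝ}
    (hM : M.IsHermitian) (hcard : (Finset.univ.filter fun i => 0 < hM.eigenvalues i).card ≤ 1) :
    IsHyperbolic M := by
  rcases isEmpty_or_nonempty n with _ | _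
  · intro z w hz
    simp [dotProduct] at hz
  obtain ⟨i, hi⟩ := Finset.card_le_one_iff_subset_singleton.mp hcard
  have hother (j : n) (hj : j ≠ i) : hM.eigenvalues j ≤ 0 := by
    by_contra! hpos
    exact hj (Finset.mem_singleton.mp (hi (by simpa using hpos)))
  refine isHyperbolic_of_nonpos_of_dotProduct_eq_zero
    ((conjTranspose_eq_transpose_of_trivial M).symm.trans hM)
    (star (hM.eigenvectorUnitary : Matrix n n ℝ) i) fun v hv => ?_
  have hform := star_dotProduct_mulVec_eq_sum_eigenvalues hM v
  rw [star_trivial] at hform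
  rw [hform]
  refine Finset.sum_nonpos fun j _ => ?_
  rcases eq_or_ne j i with rfl | hj
  · have hcoord : (star (hM.eigenvectorUnitary : Matrix n n ℝ) *ᵥ v) j = 0 := hv
    simp [hcoord]
  · exact mul_nonpos_of_nonpos_of_nonneg (hother j hj) (sq_nonneg _)

namespace IsHyperbolic

variable {M : Matrix n n ℝ}

theorem transpose_mul_mul (hM : IsHyperbolic M) (B : Matrix n m ℝ) :
    IsHyperbolic (Bᵀ * M * B) := by
  have hform (v w : m → ℝ) : v ⬝ᵥ (Bᵀ * M * B) *ᵥ w = (B *ᵥ v) ⬝ᵥ M *ᵥ (B *ᵥ w) := by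
    rw [← mulVec_mulVec, ← mulVec_mulVec, dotProduct_mulVec, vecMul_transpose]
  intro z w hz hzw
  rw [hform] at hz hzw ⊢
  exact hM hz hzw

theorem submatrix (hM : IsHyperbolic M) (e : m → n) : IsHyperbolic (M.submatrix e e) := by
  classical
  have hsub : M.submatrix e e =
      ((1 : Matrix n n ℝ).submatrix id e)ᵀ * M * (1 : Matrix n n ℝ).submatrix id e := by
    ext i j
    simp [mul_apply, one_apply]
  rw [hsub]
  exact hM.transpose_mul_mul _

theorem eigenvalue_nonpos (hM : IsHyperbolic M) {z v : n → ℝ} {θ : ℝ} (hz : 0 < z ⬝ᵥ M *ᵥ z)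
    (hv : v ≠ 0) (hMv : M *ᵥ v = θ • v) (hzv : z ⬝ᵥ v = 0) : θ ≤ 0 := by
  have hform : θ * (v ⬝ᵥ v) ≤ 0 := by
    simpa [hMv] using hM hz (w := v) (by rw [hMv, dotProduct_smul, hzv, smul_zero])
  have hvv : 0 < v ⬝ᵥ v := by simpa using dotProduct_star_self_pos_iff.mpr hv
  exact nonpos_of_mul_nonpos_left hform hvv

end IsHyperbolic

end Matrix

section Graph

variable {V ι : Type*} {G : SimpleGraph V} {H : SimpleGraph ι}

theorem isRegularOfDegree_comap_val [DecidableRel G.Adj] {s : Finset V} {d : ℕ}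
    (hd : ∀ x ∈ s, (s.filter fun y => G.Adj x y).card = d) :
    (G.comap ((↑) : s → V)).IsRegularOfDegree d := by
  intro x
  rw [← hd x x.2, ← SimpleGraph.card_neighborFinset_eq_degree,
    SimpleGraph.neighborFinset_eq_filter, Finset.card_filter, Finset.card_filter,
    ← Finset.sum_coe_sort s]
  rfl

variable [Fintype V] {q : ℝ}

theorem qDistMatrix_apply_nonneg (hq : 0 ≤ q) (x y : V) : 0 ≤ qDistMatrix G q x y := by
  rw [qDistMatrix, of_apply]
  positivity

theorem qDistMatrix_apply_pos (hG : G.Connected) (hq : 0 < q) {x y : V} (hxy : x ≠ y) :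
    0 < qDistMatrix G q x y := by
  rw [qDistMatrix, of_apply]
  exact Finset.sum_pos (fun _ _ => by positivity)
    (Finset.nonempty_range_iff.mpr (hG.pos_dist_of_ne hxy).ne')

theorem qDistMatrix_submatrix_eq [DecidableEq ι] [DecidableRel H.Adj] (hG : G.Connected)
    (φ : H ↪g G) (hφ : ∀ a b, G.dist (φ a) (φ b) ≤ 2) :
    (qDistMatrix G q).submatrix φ φ =
      (1 + 1 / q) • (of 1 - 1) - (1 / q) • H.adjMatrix ℝ := by
  ext a b
  rcases eq_or_ne a b with rfl | hab
  · simp [qDistMatrix]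
  have hpos : 0 < G.dist (φ a) (φ b) := hG.pos_dist_of_ne (φ.injective.ne hab)
  by_cases hadj : H.Adj a b
  · have hdist : G.dist (φ a) (φ b) = 1 :=
      SimpleGraph.dist_eq_one_iff_adj.mpr (φ.map_adj_iff.mpr hadj)
    simp [qDistMatrix, hdist, hadj, hab]
  · have hne : G.dist (φ a) (φ b) ≠ 1 := fun h =>
      hadj (φ.map_adj_iff.mp (SimpleGraph.dist_eq_one_iff_adj.mp h))
    have hdist : G.dist (φ a) (φ b) = 2 := by have := hφ a b; omega
    simp [qDistMatrix, hdist, hadj, hab, Finset.sum_range_succ]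

variable [Fintype ι]

theorem one_dotProduct_qDistMatrix_submatrix_mulVec_one_pos [Nontrivial ι] (hG : G.Connected)
    (hq : 0 < q) {f : ι → V} (hf : f.Injective) :
    0 < 1 ⬝ᵥ (qDistMatrix G q).submatrix f f *ᵥ 1 := by
  obtain ⟨a, b, hab⟩ := exists_pair_ne ι
  have hsum : 1 ⬝ᵥ (qDistMatrix G q).submatrix f f *ᵥ 1 =
      ∑ i, ∑ j, qDistMatrix G q (f i) (f j) := by
    simp [dotProduct, mulVec]
  rw [hsum]
  have hnonneg (i j : ι) : 0 ≤ qDistMatrix G q (f i) (f j) := qDistMatrix_apply_nonneg hq.le _ _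
  exact Finset.sum_pos' (fun i _ => Finset.sum_nonneg fun j _ => hnonneg i j)
    ⟨a, Finset.mem_univ a, Finset.sum_pos' (fun j _ => hnonneg a j)
      ⟨b, Finset.mem_univ b, qDistMatrix_apply_pos hG hq (hf.ne hab)⟩⟩

theorem qDistMatrix_submatrix_mulVec [DecidableRel H.Adj] (hG : G.Connected)
    (hq : q ≠ 0) (φ : H ↪g G) (hφ : ∀ a b, G.dist (φ a) (φ b) ≤ 2) {v : ι → ℝ} {μ : ℝ}
    (hv : H.adjMatrix ℝ *ᵥ v = μ • v) (hsum : 1 ⬝ᵥ v = 0) :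
    (qDistMatrix G q).submatrix φ φ *ᵥ v = (-(q + 1 + μ) / q) • v := by
  classical
  have hJ : (of 1 : Matrix ι ι ℝ) *ᵥ v = 0 := funext fun _ => hsum
  rw [qDistMatrix_submatrix_eq hG φ hφ, sub_mulVec, smul_mulVec, smul_mulVec, sub_mulVec, hJ,
    one_mulVec, hv]
  ext a
  simp only [Pi.sub_apply, Pi.smul_apply, Pi.zero_apply, smul_eq_mul]
  field_simp
  ring

end Graph

theorem stmt15_general {V ι : Type*} [Fintype V] [DecidableEq V] [Fintype ι]
    {G : SimpleGraph V} {H : SimpleGraph ι} [DecidableRel H.Adj] (hG : G.Connected)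
    {q : ℝ} (hq : 0 < q) {d : ℕ} (hd : H.IsRegularOfDegree d)
    (φ : H ↪g G) (hφ : ∀ a b, G.dist (φ a) (φ b) ≤ 2) (hH : (qDistMatrix G q).IsHermitian)
    (hone : (Finset.univ.filter fun i : V => 0 < hH.eigenvalues i).card ≤ 1)
    (μ : ℝ) (hμ : IsEigenval (H.adjMatrix ℝ) μ) : -q - 1 ≤ μ := by
  obtain ⟨v, hv0, hv⟩ := hμ
  have hdeg : 1 ᵥ* H.adjMatrix ℝ = (d : ℝ) • 1 := by
    ext a
    simp [hd a]
  rcases dotProduct_eq_zero_or_eq_of_vecMul_eq_smul hdeg hv with hsum | rfl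
  · have := nontrivial_of_one_dotProduct_eq_zero hv0 hsum
    have hθ : -(q + 1 + μ) / q ≤ 0 :=
      ((isHyperbolic_of_card_eigenvalues_pos_le_one hH hone).submatrix φ).eigenvalue_nonpos
        (one_dotProduct_qDistMatrix_submatrix_mulVec_one_pos hG hq φ.injective) hv0
        (qDistMatrix_submatrix_mulVec hG hq.ne' φ hφ hv hsum) hsum
    linarith [(div_le_iff₀ hq).mp hθ]
  · linarith [(d.cast_nonneg : (0 : ℝ) ≤ d)]

/-- Let `Γ` be a distance-regular graph of diameter `D ≥ 2` and `Δ` a regular induced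
subgraph on at least two vertices, any two vertices of which are at distance at most two
in `Γ`. If the `q`-distance matrix of `Γ` has exactly one positive eigenvalue for some
`q > 0`, then the smallest adjacency eigenvalue of `Δ` is at least `-q - 1`
(i.e. every adjacency eigenvalue of `Δ` is at least `-q - 1`). -/
theorem stmt15 {V : Type*} [Fintype V] [DecidableEq V] (G : SimpleGraph V)
    [DecidableRel G.Adj]
    (D : ℕ) (p : ℕ → ℕ → ℕ → ℕ) (hdrg : IsDRG G D p) (hD : 2 ≤ D)
    (q : ℝ) (hq : 0 < q)
    (s : Finset V) (hs2 : 2 ≤ s.card)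
    (hreg : ∃ d : ℕ, ∀ x ∈ s, (s.filter fun y => G.Adj x y).card = d)
    (hdist : ∀ x ∈ s, ∀ y ∈ s, G.dist x y ≤ 2)
    (hH : (qDistMatrix G q).IsHermitian)
    (hone : (Finset.univ.filter fun i : V => 0 < hH.eigenvalues i).card = 1) :
    ∀ μ : ℝ,
      IsEigenval (Matrix.of fun a b : ↥s => if G.Adj a.1 b.1 then (1 : ℝ) else 0) μ →
        -q - 1 ≤ μ := by
  obtain ⟨d, hd⟩ := hreg
  exact stmt15_general hdrg.connected hq (isRegularOfDegree_comap_val hd)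
    (SimpleGraph.Embedding.comap (Function.Embedding.subtype _) G)
    (fun a b => hdist a a.2 b b.2) hH hone.le
end

section
/- Let Γ be a distance-regular graph on n vertices of diameter D ≥ 2, and let q be a nonzero real number. Assume that the q-distance matrix 𝔻_q of Γ has exactly one positive eigenvalue. Then all entries of 𝔻_q are nonnegative, the all-ones vector is an eigenvector of 𝔻_q for its (unique) positive eigenvalue, and q > 0 or q ≤ −1 holds. -/
/-!
A symmetric matrix with at most one positive eigenvalue has a Lorentzian form: it is nonpositive on
a hyperplane, hence on every vector orthogonal, with respect to the form, to a vector on which it is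
positive. Along a shortest path `x, a, b` in a non-complete connected graph, the `q`-distance matrix
restricts to a `3 × 3` matrix with zero diagonal, entries `1` at the two edges, and `s = 1 + 1/q` at
`x, b`. If `s < 0`, its form is positive on the orthogonal vectors `(1, 0, -1)` and `(1, 1 - s, 1)`,
which is impossible. So `-1 ≤ 1/q`, which makes all the geometric sums nonnegative; and the row sums
agree because the number of vertices at each given distance does not depend on the base vertex.
-/

open Finset Matrix

section Hermitian

variable {𝕜 n : Type*} [RCLike 𝕜] [Fintype n] [DecidableEq n] {A : Matrix n n 𝕜}

lemma star_dotProduct_mulVec_eq_sum_eigenvalues_s18 (hA : A.IsHermitian) (w : n → 𝕜) :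
    star w ⬝ᵥ A *ᵥ w =
      ∑ i, (hA.eigenvalues i : 𝕜) *
        (‖(star (hA.eigenvectorUnitary : Matrix n n 𝕜) *ᵥ w) i‖ ^ 2 : ℝ) := by
  set U := (hA.eigenvectorUnitary : Matrix n n 𝕜)
  have hAU : A = U * diagonal (RCLike.ofReal ∘ hA.eigenvalues) * star U :=
    hA.spectral_theorem.trans (Unitary.conjStarAlgAut_apply _ _)
  have hstar : star w ᵥ* U = star (star U *ᵥ w) := by
    rw [star_mulVec, star_eq_conjTranspose, conjTranspose_conjTranspose]
  calc star w ⬝ᵥ A *ᵥ w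
      = star (star U *ᵥ w) ⬝ᵥ diagonal (RCLike.ofReal ∘ hA.eigenvalues) *ᵥ (star U *ᵥ w) := by
        rw [← hstar, ← dotProduct_mulVec, mulVec_mulVec, mulVec_mulVec, ← hAU]
    _ = _ := by
        refine sum_congr rfl fun i _ => ?_
        rw [mulVec_diagonal, mul_left_comm, Pi.star_apply, RCLike.star_def, RCLike.conj_mul]
        simp

lemma exists_forall_dotProduct_eq_zero_re_nonpos (hA : A.IsHermitian)
    (hpos : #{i | 0 < hA.eigenvalues i} ≤ 1) :
    ∃ e : n → 𝕜, ∀ w, e ⬝ᵥ w = 0 → RCLike.re (star w ⬝ᵥ A *ᵥ w) ≤ 0 := by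
  cases isEmpty_or_nonempty n with
  | inl _ => exact ⟨0, fun w _ => by simp⟩
  | inr _ =>
    obtain ⟨i₀, hi₀⟩ := card_le_one_iff_subset_singleton.mp hpos
    refine ⟨star (hA.eigenvectorUnitary : Matrix n n 𝕜) i₀, fun w hw => ?_⟩
    rw [star_dotProduct_mulVec_eq_sum_eigenvalues_s18 hA, map_sum]
    refine sum_nonpos fun i _ => ?_
    rw [← RCLike.ofReal_mul, RCLike.ofReal_re]
    obtain rfl | hne := eq_or_ne i i₀
    · have hcoord : (star (hA.eigenvectorUnitary : Matrix n n 𝕜) *ᵥ w) i = 0 := hw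
      simp [hcoord]
    · have hi : hA.eigenvalues i ≤ 0 := by
        by_contra! hlt
        exact hne (mem_singleton.mp (hi₀ (by simpa using hlt)))
      exact mul_nonpos_of_nonpos_of_nonneg hi (by positivity)

lemma re_star_dotProduct_mulVec_nonpos_of_orthogonal (hA : A.IsHermitian)
    (hpos : #{i | 0 < hA.eigenvalues i} ≤ 1) {u v : n → 𝕜} (huv : star u ⬝ᵥ A *ᵥ v = 0)
    (hu : 0 < RCLike.re (star u ⬝ᵥ A *ᵥ u)) : RCLike.re (star v ⬝ᵥ A *ᵥ v) ≤ 0 := by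
  obtain ⟨e, he⟩ := exists_forall_dotProduct_eq_zero_re_nonpos hA hpos
  have hvu : star v ⬝ᵥ A *ᵥ u = 0 := by
    rw [star_dotProduct, star_mulVec, hA.eq, ← dotProduct_mulVec, huv, star_zero]
  have heu : e ⬝ᵥ u ≠ 0 := fun h => (he u h).not_gt hu
  have hform : star ((e ⬝ᵥ v) • u - (e ⬝ᵥ u) • v) ⬝ᵥ A *ᵥ ((e ⬝ᵥ v) • u - (e ⬝ᵥ u) • v) =
      (‖e ⬝ᵥ v‖ ^ 2 : ℝ) * (star u ⬝ᵥ A *ᵥ u) + (‖e ⬝ᵥ u‖ ^ 2 : ℝ) * (star v ⬝ᵥ A *ᵥ v) := by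
    simp only [mulVec_sub, mulVec_smul, star_sub, star_smul, sub_dotProduct, dotProduct_sub,
      smul_dotProduct, dotProduct_smul, huv, hvu, smul_eq_mul, RCLike.star_def, RCLike.ofReal_pow,
      ← RCLike.conj_mul]
    ring
  have hle := he ((e ⬝ᵥ v) • u - (e ⬝ᵥ u) • v) (by
    simp only [dotProduct_sub, dotProduct_smul, smul_eq_mul]
    ring)
  rw [hform, map_add, RCLike.re_ofReal_mul, RCLike.re_ofReal_mul] at hle
  by_contra! hv
  nlinarith [mul_pos (pow_pos (norm_pos_iff.mpr heu) 2) hv,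
    mul_nonneg (sq_nonneg ‖e ⬝ᵥ v‖) hu.le]

lemma apply_nonneg_of_card_pos_eigenvalues_le_one {A : Matrix n n ℝ} (hA : A.IsHermitian)
    (hpos : #{i | 0 < hA.eigenvalues i} ≤ 1) (hdiag : ∀ i, A i i = 0) {x a b : n}
    (hxa : A x a ≠ 0) (hab : A a b = A x a) : 0 ≤ A x b := by
  by_contra! hneg
  set c := A x a
  set s := A x b
  have hax : A a x = c := hA.apply x a
  have hbx : A b x = s := hA.apply x b
  have hba : A b a = c := (hA.apply a b).trans hab
  have hform (α β γ α' β' γ' : ℝ) :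
      star (Pi.single x α + Pi.single a β + Pi.single b γ) ⬝ᵥ
        A *ᵥ (Pi.single x α' + Pi.single a β' + Pi.single b γ') =
      α * (c * β' + s * γ') + β * (c * α' + c * γ') + γ * (s * α' + c * β') := by
    simp only [star_trivial, mulVec_add, dotProduct_add, add_dotProduct, single_dotProduct,
      mulVec_single, Pi.smul_apply, col_apply, MulOpposite.smul_eq_mul_unop, MulOpposite.unop_op,
      hdiag, hab, hax, hbx, hba]
    ring
  have hnonpos := re_star_dotProduct_mulVec_nonpos_of_orthogonal hA hpos
    (u := Pi.single x 1 + Pi.single a 0 + Pi.single b (-1))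
    (v := Pi.single x c + Pi.single a (1 - s) + Pi.single b c)
    (by rw [hform]; ring) (by rw [hform, RCLike.re_to_real]; linarith)
  rw [hform, RCLike.re_to_real] at hnonpos
  nlinarith [sq_pos_of_ne_zero hxa]

end Hermitian

lemma geom_sum_nonneg_of_neg_one_le {R : Type*} [Ring R] [LinearOrder R] [IsStrictOrderedRing R]
    {x : R} (hx : -1 ≤ x) (m : ℕ) : 0 ≤ ∑ j ∈ range m, x ^ j := by
  obtain rfl | hlt := hx.eq_or_lt
  · rw [neg_one_geom_sum]
    split_ifs <;> simp
  · obtain rfl | hm := eq_or_ne m 0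
    · simp
    · exact (geom_sum_pos' (neg_lt_iff_pos_add.mp hlt) hm).le

lemma exists_adj_adj_dist_eq_two {V : Type*} {G : SimpleGraph V} (hG : G.Connected)
    (hne : G ≠ ⊤) : ∃ x a b, G.Adj x a ∧ G.Adj a b ∧ G.dist x b = 2 := by
  obtain ⟨y, z, hyz, hnadj⟩ := SimpleGraph.ne_top_iff_exists_not_adj.mp hne
  obtain ⟨w, hw⟩ := hG.exists_walk_length_eq_dist y z
  obtain ⟨x, a, b, hxa, hab, hnadj_xb, hxb⟩ :=
    w.exists_adj_adj_not_adj_ne hw (hG.one_lt_dist_of_ne_of_not_adj hyz hnadj)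
  exact ⟨x, a, b, hxa, hab, (SimpleGraph.dist_le (.cons hxa (.cons hab .nil))).antisymm
    (hG.one_lt_dist_of_ne_of_not_adj hxb hnadj_xb)⟩

/-- `G` is distance degree regular: for each `i`, all vertices have the same number of vertices at
distance `i`. Among the regularity conditions expressed by `IsDRG`, this is the one that makes the
row sums of every function of the distance agree. -/
def IsDistanceDegreeRegular {V : Type*} (G : SimpleGraph V) : Prop :=
  ∀ (i : ℕ) (x y : V), {z | G.dist x z = i}.ncard = {z | G.dist y z = i}.ncard

lemma IsDistanceDegreeRegular.sum_dist_eq {V M : Type*} [Fintype V] [AddCommMonoid M]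
    {G : SimpleGraph V} (hG : IsDistanceDegreeRegular G) (f : ℕ → M) (x y : V) :
    ∑ z, f (G.dist x z) = ∑ z, f (G.dist y z) := by
  have hcount (i : ℕ) (x : V) :
      (univ.val.map (G.dist x)).count i = {z | G.dist x z = i}.ncard := by
    simp [Multiset.count_map, Set.ncard_eq_toFinset_card', Finset.card, eq_comm]
  have hmap : univ.val.map (G.dist x) = univ.val.map (G.dist y) :=
    Multiset.ext.mpr fun i => by rw [hcount, hcount, hG i x y]
  have hsum := congrArg (fun s => (s.map f).sum) hmap
  simp only [Multiset.map_map] at hsum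
  exact hsum

namespace IsDRG

variable {V : Type*} [Fintype V] {G : SimpleGraph V} {D : ℕ} {p : ℕ → ℕ → ℕ → ℕ}

lemma isDistanceDegreeRegular (h : IsDRG G D p) : IsDistanceDegreeRegular G := by
  suffices hcard : ∀ i x, {z | G.dist x z = i}.ncard = if i ≤ D then p 0 i i else 0 from
    fun i x y => (hcard i x).trans (hcard i y).symm
  intro i x
  split_ifs with hi
  · simpa using h.inter 0 i i D.zero_le hi hi x x SimpleGraph.dist_self
  · have hempty : {z | G.dist x z = i} = ∅ :=
      Set.eq_empty_of_forall_notMem fun z hz => hi (hz ▸ h.dist_le x z)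
    rw [hempty, Set.ncard_empty]

lemma ne_top (h : IsDRG G D p) (hD : 2 ≤ D) : G ≠ ⊤ := by
  classical
  rintro rfl
  obtain ⟨x, y, hxy⟩ := h.exists_dist_eq
  rw [SimpleGraph.dist_top] at hxy
  split_ifs at hxy <;> omega

end IsDRG

namespace qDistMatrix

variable {V : Type*} [Fintype V] {G : SimpleGraph V} {q : ℝ}

lemma apply_self (x : V) : qDistMatrix G q x x = 0 := by
  simp [qDistMatrix]

lemma apply_of_adj {x y : V} (h : G.Adj x y) : qDistMatrix G q x y = 1 := by
  simp [qDistMatrix, SimpleGraph.dist_eq_one_iff_adj.mpr h]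

lemma apply_of_dist_eq_two {x y : V} (h : G.dist x y = 2) : qDistMatrix G q x y = 1 / q + 1 := by
  rw [qDistMatrix, of_apply, h, geom_sum_two]

lemma apply_nonneg (hq : -1 ≤ 1 / q) (x y : V) : 0 ≤ qDistMatrix G q x y :=
  geom_sum_nonneg_of_neg_one_le hq _

lemma neg_one_le_one_div [DecidableEq V] (hG : G.Connected) (hne : G ≠ ⊤)
    (hH : (qDistMatrix G q).IsHermitian) (hpos : #{i | 0 < hH.eigenvalues i} ≤ 1) :
    -1 ≤ 1 / q := by
  obtain ⟨x, a, b, hxa, hab, hxb⟩ := exists_adj_adj_dist_eq_two hG hne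
  have hentry : 0 ≤ qDistMatrix G q x b :=
    apply_nonneg_of_card_pos_eigenvalues_le_one hH hpos apply_self
      (by rw [apply_of_adj hxa]; exact one_ne_zero)
      ((apply_of_adj hab).trans (apply_of_adj hxa).symm)
  rw [apply_of_dist_eq_two hxb] at hentry
  linarith

lemma mulVec_one (hG : IsDistanceDegreeRegular G) (x : V) :
    qDistMatrix G q *ᵥ 1 = (∑ z, qDistMatrix G q x z) • 1 := by
  ext y
  simpa [mulVec, dotProduct, qDistMatrix] using
    hG.sum_dist_eq (fun i => ∑ j ∈ range i, (1 / q) ^ j) y x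

lemma sum_apply_pos (hq : -1 ≤ 1 / q) {x a : V} (hxa : G.Adj x a) :
    0 < ∑ z, qDistMatrix G q x z :=
  sum_pos' (fun z _ => apply_nonneg hq x z)
    ⟨a, mem_univ a, by rw [apply_of_adj hxa]; exact one_pos⟩

end qDistMatrix

theorem stmt18_general {V : Type*} [Fintype V] [DecidableEq V] {G : SimpleGraph V}
    (hG : G.Connected) (hne : G ≠ ⊤) (hreg : IsDistanceDegreeRegular G) {q : ℝ} (hq : q ≠ 0)
    (hH : (qDistMatrix G q).IsHermitian) (hpos : #{i | 0 < hH.eigenvalues i} ≤ 1) :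
    (∀ x y, 0 ≤ qDistMatrix G q x y) ∧
      (∃ μ : ℝ, 0 < μ ∧ qDistMatrix G q *ᵥ (fun _ => 1) = μ • fun _ => 1) ∧
      (0 < q ∨ q ≤ -1) := by
  have hinv := qDistMatrix.neg_one_le_one_div hG hne hH hpos
  obtain ⟨x, a, -, hxa, -, -⟩ := exists_adj_adj_dist_eq_two hG hne
  refine ⟨qDistMatrix.apply_nonneg hinv,
    ⟨_, qDistMatrix.sum_apply_pos hinv hxa, qDistMatrix.mulVec_one hreg x⟩, ?_⟩
  refine or_iff_not_imp_left.mpr fun hq_nonpos => ?_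
  rw [le_div_iff_of_neg (lt_of_le_of_ne (not_lt.mp hq_nonpos) hq)] at hinv
  linarith

/-- Let `Γ` be a distance-regular graph of diameter `D ≥ 2` on `n` vertices whose
`q`-distance matrix has exactly one positive eigenvalue. Then all entries of the
`q`-distance matrix are nonnegative, the all-ones vector is an eigenvector for the
(unique) positive eigenvalue, and `q > 0` or `q ≤ -1`. -/
theorem stmt18 {V : Type*} [Fintype V] [DecidableEq V] (G : SimpleGraph V)
    (D : ℕ) (p : ℕ → ℕ → ℕ → ℕ) (hdrg : IsDRG G D p) (hD : 2 ≤ D)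
    (q : ℝ) (hq : q ≠ 0)
    (hH : (qDistMatrix G q).IsHermitian)
    (hone : (Finset.univ.filter fun i : V => 0 < hH.eigenvalues i).card = 1) :
    (∀ x y : V, 0 ≤ qDistMatrix G q x y) ∧
      (∃ μ : ℝ, 0 < μ ∧
        (qDistMatrix G q).mulVec (fun _ => 1) = μ • (fun _ => (1 : ℝ))) ∧
      (0 < q ∨ q ≤ -1) :=
  stmt18_general hdrg.connected (hdrg.ne_top hD) hdrg.isDistanceDegreeRegular hq hH hone.le
end
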